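/- Let T be a set of permutation patterns, each of length at least 3, with |T| ≤ 3. Suppose that for all r, s ≥ 1 the pair {id_r, ψ_s} is not contained in T, that T ≠ {132, 213, 321}, and that T ≠ {123, 231, 312}. Then ⟨S_n(T)⟩ = S_n for every n. -/

import Mathlib

/-- A permutation `π ∈ S_n` contains the pattern `τ ∈ S_k` if there is a strictly
increasing `f : Fin k → Fin n` such that `τ a < τ b ↔ π (f a) < π (f b)`. -/
def PermContains {k n : ℕ} (τ : Equiv.Perm (Fin k)) (π : Equiv.Perm (Fin n)) : Prop :=
  ∃ f : Fin k → Fin n, StrictMono f ∧ ∀ a b : Fin k, τ a < τ b ↔ π (f a) < π (f b)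

/-- `avoidSet n T` is `S_n(T)`: the permutations of `Fin n` avoiding every pattern in `T`,
where `T` is a set of permutations of arbitrary lengths. -/
def avoidSet (n : ℕ) (T : Set (Σ k : ℕ, Equiv.Perm (Fin k))) : Set (Equiv.Perm (Fin n)) :=
  {π | ∀ τ ∈ T, ¬ PermContains τ.2 π}
def p123 : Equiv.Perm (Fin 3) := 1
def p132 : Equiv.Perm (Fin 3) := Equiv.swap 1 2
def p213 : Equiv.Perm (Fin 3) := Equiv.swap 0 1
def p231 : Equiv.Perm (Fin 3) := finRotate 3
def p312 : Equiv.Perm (Fin 3) := (finRotate 3)⁻¹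
def p321 : Equiv.Perm (Fin 3) := Equiv.swap 0 2

/-!
Suppose first that no pattern in `T` is an identity. Then each one contains a nonidentity pattern
of length three; choose one for each and let `S` be the set of choices. Avoiding `S` implies
avoiding `T`, and unless `S = {132, 213, 321}` a few explicit permutations avoiding `S` (rotations,
reversals, adjacent transpositions and their products) generate the symmetric group. If
`S = {132, 213, 321}`, then the three choices are distinct and `T ≠ S` forces some pattern of `T`
to have length at least four. That pattern contains a second nonidentity pattern of length three,
which may be chosen instead, or one of `1243`, `2134`, `4321`; these are also avoided by the
explicit generators used for the remaining two patterns.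

If `T` includes an identity, then it includes no reversal, and the complements `ψ τ` of its
patterns include no identity.
-/

/-- A permutation pattern of arbitrary length. -/
abbrev Pattern := Σ k : ℕ, Equiv.Perm (Fin k)

theorem eq_one_of_strictMono {n : ℕ} {π : Equiv.Perm (Fin n)} (h : StrictMono π) : π = 1 :=
  Equiv.ext (congrFun h.eq_id)

theorem revPerm_inv (n : ℕ) : (Fin.revPerm : Equiv.Perm (Fin n))⁻¹ = Fin.revPerm := rfl

theorem revPerm_mul_revPerm (n : ℕ) : (Fin.revPerm : Equiv.Perm (Fin n)) * Fin.revPerm = 1 :=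
  inv_mul_cancel Fin.revPerm

theorem revPerm_mul_cancel_left {n : ℕ} (π : Equiv.Perm (Fin n)) :
    Fin.revPerm * (Fin.revPerm * π) = π :=
  inv_mul_cancel_left Fin.revPerm π

namespace PermContains

variable {k l n : ℕ} {τ : Equiv.Perm (Fin k)} {σ : Equiv.Perm (Fin l)} {π : Equiv.Perm (Fin n)}

theorem iff_strictMono_symm :
    PermContains τ π ↔ ∃ f : Fin k → Fin n,
      StrictMono f ∧ StrictMono fun a => π (f (τ.symm a)) := by
  refine exists_congr fun f => and_congr_right fun _ => ⟨fun h a b hab => ?_, fun h a b => ?_⟩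
  · exact (h _ _).1 (by simpa only [Equiv.apply_symm_apply] using hab)
  · simpa only [Equiv.symm_apply_apply] using (h.lt_iff_lt (a := τ a) (b := τ b)).symm

theorem trans (hτσ : PermContains τ σ) (hσπ : PermContains σ π) : PermContains τ π := by
  obtain ⟨f, hf, hf'⟩ := hτσ
  obtain ⟨g, hg, hg'⟩ := hσπ
  exact ⟨g ∘ f, hg.comp hf, fun a b => (hf' a b).trans (hg' _ _)⟩

theorem inv (h : PermContains τ π) : PermContains τ⁻¹ π⁻¹ := by
  obtain ⟨f, hf, hπf⟩ := iff_strictMono_symm.1 h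
  exact iff_strictMono_symm.2 ⟨_, hπf, fun a b hab => by simpa [Equiv.Perm.inv_def] using hf hab⟩

theorem revPerm_mul_iff :
    PermContains (Fin.revPerm * τ) (Fin.revPerm * π) ↔ PermContains τ π := by
  simp only [PermContains, Equiv.Perm.mul_apply, Fin.revPerm_apply, Fin.rev_lt_rev]
  exact exists_congr fun f => and_congr_right fun _ => forall_comm

theorem mul_revPerm (h : PermContains τ π) :
    PermContains (τ * Fin.revPerm) (π * Fin.revPerm) := by
  simpa [revPerm_inv] using (revPerm_mul_iff.2 h.inv).inv

theorem eq_one (h : PermContains τ (1 : Equiv.Perm (Fin n))) : τ = 1 := by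
  obtain ⟨f, hf, hτ⟩ := h
  exact eq_one_of_strictMono fun a b hab => (hτ a b).2 (hf hab)

theorem eq {τ π : Equiv.Perm (Fin n)} (h : PermContains τ π) : τ = π := by
  obtain ⟨f, hf, hmono⟩ := iff_strictMono_symm.1 h
  obtain rfl : f = id := hf.eq_id
  exact (mul_inv_eq_one.1 (eq_one_of_strictMono (π := π * τ⁻¹) hmono)).symm

/-- Enlarge the set of positions of an occurrence of `τ` and standardize `π` on it by sorting. -/
theorem exists_between (hkl : k ≤ l) (hln : l ≤ n) (h : PermContains τ π) :
    ∃ σ : Equiv.Perm (Fin l), PermContains τ σ ∧ PermContains σ π := by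
  obtain ⟨f, hf, hτπ⟩ := h
  obtain ⟨s, hfs, hs⟩ := Finset.exists_superset_card_eq (s := Finset.univ.map ⟨f, hf.injective⟩)
    (n := l) (by simpa using hkl) (by simpa using hln)
  let g : Fin l ≃o s := s.orderIsoOfFin hs
  let e : Fin k → Fin l := fun a => g.symm ⟨f a, hfs (by simp)⟩
  let ρ : Equiv.Perm (Fin l) := Tuple.sort fun b => π (g b)
  have hge (a) : (g (e a) : Fin n) = f a := by simp [e]
  have hinj : Function.Injective fun b => π (g b) :=
    π.injective.comp (Subtype.val_injective.comp g.injective)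
  have hsort : StrictMono fun a => π (g (ρ a)) :=
    (Tuple.monotone_sort _).strictMono_of_injective (hinj.comp ρ.injective)
  refine ⟨ρ⁻¹, ⟨e, fun a b hab => g.symm.strictMono (hf hab), fun a b => ?_⟩,
    iff_strictMono_symm.2 ⟨fun a => g a, fun a b hab => g.strictMono hab, hsort⟩⟩
  rw [hτπ, ← hge a, ← hge b, ← hsort.lt_iff_lt]
  simp only [Equiv.Perm.inv_def, Equiv.apply_symm_apply]

theorem three_iff {τ : Equiv.Perm (Fin 3)} : PermContains τ π ↔
    ∃ i j k : Fin n, i < j ∧ j < k ∧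
      π (![i, j, k] (τ.symm 0)) < π (![i, j, k] (τ.symm 1)) ∧
      π (![i, j, k] (τ.symm 1)) < π (![i, j, k] (τ.symm 2)) := by
  simp only [iff_strictMono_symm, Fin.strictMono_iff_lt_succ, Fin.forall_fin_succ,
    IsEmpty.forall_iff, and_true, Fin.exists_fin_succ_pi, Fin.exists_fin_zero_pi, and_assoc]
  rfl

theorem four_iff {τ : Equiv.Perm (Fin 4)} : PermContains τ π ↔
    ∃ i j k l : Fin n, i < j ∧ j < k ∧ k < l ∧
      π (![i, j, k, l] (τ.symm 0)) < π (![i, j, k, l] (τ.symm 1)) ∧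
      π (![i, j, k, l] (τ.symm 1)) < π (![i, j, k, l] (τ.symm 2)) ∧
      π (![i, j, k, l] (τ.symm 2)) < π (![i, j, k, l] (τ.symm 3)) := by
  simp only [iff_strictMono_symm, Fin.strictMono_iff_lt_succ, Fin.forall_fin_succ,
    IsEmpty.forall_iff, and_true, Fin.exists_fin_succ_pi, Fin.exists_fin_zero_pi, and_assoc]
  rfl

instance decidableThree (τ : Equiv.Perm (Fin 3)) : Decidable (PermContains τ π) :=
  decidable_of_iff' _ three_iff

end PermContains

section Descent

variable {k n : ℕ} {π : Equiv.Perm (Fin n)}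

theorem exists_lt_apply_lt_of_ne_one (hπ : π ≠ 1) : ∃ i j, i < j ∧ π j < π i := by
  by_contra! hle
  have hmono : Monotone π := monotone_iff_forall_lt.2 hle
  exact hπ (eq_one_of_strictMono (hmono.strictMono_of_injective π.injective))

theorem exists_permContains_ne_one (hπ : π ≠ 1) (hk : 2 ≤ k) (hkn : k ≤ n) :
    ∃ τ : Equiv.Perm (Fin k), τ ≠ 1 ∧ PermContains τ π := by
  obtain ⟨i, j, hij, hji⟩ := exists_lt_apply_lt_of_ne_one hπ
  have hdescent : PermContains (Equiv.swap 0 1 : Equiv.Perm (Fin 2)) π :=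
    PermContains.iff_strictMono_symm.2
      ⟨![i, j], by simpa [Fin.strictMono_iff_lt_succ], by simpa [Fin.strictMono_iff_lt_succ]⟩
  have swap_ne : (Equiv.swap 0 1 : Equiv.Perm (Fin 2)) ≠ 1 := by decide
  obtain ⟨τ, hτ, hτπ⟩ := hdescent.exists_between hk hkn
  exact ⟨τ, fun h => swap_ne (h ▸ hτ).eq_one, hτπ⟩

end Descent

/-- The pattern `1243`: contains `132`, but no other nonidentity pattern of length three. -/
def p1243 : Equiv.Perm (Fin 4) := Equiv.swap 2 3

/-- The pattern `2134`: contains `213`, but no other nonidentity pattern of length three. -/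
def p2134 : Equiv.Perm (Fin 4) := Equiv.swap 0 1

/-- The pattern `4321`: contains `321`, but no other pattern of length three. -/
def p4321 : Equiv.Perm (Fin 4) := Fin.revPerm

section Occurrences

variable {n : ℕ} {π : Equiv.Perm (Fin n)}

theorem permContains_p132 : PermContains p132 π ↔
    ∃ i j k, i < j ∧ j < k ∧ π i < π k ∧ π k < π j := PermContains.three_iff

theorem permContains_p213 : PermContains p213 π ↔
    ∃ i j k, i < j ∧ j < k ∧ π j < π i ∧ π i < π k := PermContains.three_iff

theorem permContains_p231 : PermContains p231 π ↔
    ∃ i j k, i < j ∧ j < k ∧ π k < π i ∧ π i < π j := PermContains.three_iff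

theorem permContains_p312 : PermContains p312 π ↔
    ∃ i j k, i < j ∧ j < k ∧ π j < π k ∧ π k < π i := PermContains.three_iff

theorem permContains_p321 : PermContains p321 π ↔
    ∃ i j k, i < j ∧ j < k ∧ π k < π j ∧ π j < π i := PermContains.three_iff

theorem permContains_p1243 : PermContains p1243 π ↔ ∃ i j k l, i < j ∧ j < k ∧ k < l ∧
    π i < π j ∧ π j < π l ∧ π l < π k := PermContains.four_iff

theorem permContains_p4321 : PermContains p4321 π ↔ ∃ i j k l, i < j ∧ j < k ∧ k < l ∧
    π l < π k ∧ π k < π j ∧ π j < π i := PermContains.four_iff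

end Occurrences

/-- The permutations avoiding `T` generate the symmetric group on `n` letters, for every `n`. -/
def AvoidersGenerate (T : Set Pattern) : Prop :=
  ∀ n, Subgroup.closure (avoidSet n T) = ⊤

namespace AvoidersGenerate

variable {S T : Set Pattern}

theorem mono (hS : AvoidersGenerate S) (h : ∀ x ∈ T, ∃ y ∈ S, PermContains y.2 x.2) :
    AvoidersGenerate T := by
  refine fun n => top_unique ((hS n).ge.trans (Subgroup.closure_mono fun π hπ x hx hxπ => ?_))
  obtain ⟨y, hy, hyx⟩ := h x hx
  exact hπ y hy (hyx.trans hxπ)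

theorem mono_subset (hS : AvoidersGenerate S) (h : T ⊆ S) : AvoidersGenerate T :=
  fun n => top_unique ((hS n).ge.trans (Subgroup.closure_mono fun _ hπ x hx => hπ x (h hx)))

theorem of_inv (hS : AvoidersGenerate S) (h : ∀ x ∈ T, ⟨x.1, x.2⁻¹⟩ ∈ S) :
    AvoidersGenerate T := by
  refine fun n => top_unique ((hS n).ge.trans ((Subgroup.closure_le _).2 fun π hπ => ?_))
  have hπ' : π⁻¹ ∈ avoidSet n T := fun x hx hxπ => hπ _ (h x hx) (by simpa using hxπ.inv)
  simpa using inv_mem (Subgroup.subset_closure hπ')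

theorem of_revPerm_conj (hS : AvoidersGenerate S)
    (h : ∀ x ∈ T, ⟨x.1, Fin.revPerm * x.2 * Fin.revPerm⟩ ∈ S) : AvoidersGenerate T := by
  intro n
  let φ := (MulAut.conj (Fin.revPerm : Equiv.Perm (Fin n))).toMonoidHom
  have hφ (π) : φ π = Fin.revPerm * π * Fin.revPerm := rfl
  have hcomap : Subgroup.comap φ (Subgroup.closure (avoidSet n T)) = ⊤ := by
    refine top_unique ((hS n).ge.trans ((Subgroup.closure_le _).2 fun π hπ => ?_))
    refine Subgroup.subset_closure fun x hx hxπ => hπ _ (h x hx) ?_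
    simpa [hφ, mul_assoc, revPerm_mul_revPerm, revPerm_mul_cancel_left] using
      (PermContains.revPerm_mul_iff.2 hxπ).mul_revPerm
  exact Subgroup.comap_injective (MulEquiv.surjective _) (hcomap.trans (Subgroup.comap_top φ).symm)

end AvoidersGenerate

/-- Complementation of patterns: the values `1, …, k` are replaced by `k, …, 1`. -/
def Pattern.complement (x : Pattern) : Pattern := ⟨x.1, Fin.revPerm * x.2⟩

theorem Pattern.complement_involutive : Function.Involutive Pattern.complement :=
  fun x => Sigma.ext rfl (heq_of_eq (revPerm_mul_cancel_left x.2))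

theorem Pattern.complement_snd_ne_one {x : Pattern} (hx : x.2 ≠ Fin.revPerm) :
    x.complement.2 ≠ 1 :=
  fun h => hx (by rw [← revPerm_inv]; exact eq_inv_of_mul_eq_one_right h)

/-- Since `1` avoids the complement of `T`, the reversal `ψ` avoids `T`; and `ψ π` avoids `T`
whenever `π` avoids the complement of `T`. -/
theorem AvoidersGenerate.of_image_complement {T : Set Pattern}
    (hT : AvoidersGenerate (Pattern.complement '' T)) (h : ∀ x ∈ T, x.2 ≠ Fin.revPerm) :
    AvoidersGenerate T := by
  intro n
  have hmem {π : Equiv.Perm (Fin n)} (hπ : π ∈ avoidSet n (Pattern.complement '' T)) :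
      Fin.revPerm * π ∈ Subgroup.closure (avoidSet n T) := by
    refine Subgroup.subset_closure fun x hx hxπ => hπ _ (Set.mem_image_of_mem _ hx) ?_
    have hxπ' := PermContains.revPerm_mul_iff.2 hxπ
    rwa [revPerm_mul_cancel_left] at hxπ'
  have hone : (1 : Equiv.Perm (Fin n)) ∈ avoidSet n (Pattern.complement '' T) := by
    rintro _ ⟨x, hx, rfl⟩ hx1
    exact Pattern.complement_snd_ne_one (h x hx) hx1.eq_one
  have hrev := hmem hone
  rw [mul_one] at hrev
  exact top_unique ((hT n).ge.trans ((Subgroup.closure_le _).2 fun π hπ =>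
    (Subgroup.mul_mem_cancel_left _ hrev).1 (hmem hπ)))

section Generators

theorem eq_top_of_finRotate_mem_of_swap_mem {m : ℕ} {H : Subgroup (Equiv.Perm (Fin (m + 2)))}
    (hrot : finRotate (m + 2) ∈ H) (hswap : Equiv.swap 0 1 ∈ H) : H = ⊤ := by
  rw [eq_top_iff, ← Equiv.Perm.closure_cycle_adjacent_swap isCycle_finRotate support_finRotate 0,
    Subgroup.closure_le]
  rintro _ (rfl | rfl)
  · exact hrot
  · simpa using hswap

theorem eq_top_of_forall_swap_castSucc_succ_mem {m : ℕ} {H : Subgroup (Equiv.Perm (Fin (m + 1)))}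
    (h : ∀ k : Fin m, Equiv.swap k.castSucc k.succ ∈ H) : H = ⊤ := by
  rw [← Subgroup.toSubmonoid_inj, Subgroup.top_toSubmonoid, eq_top_iff,
    ← Equiv.Perm.mclosure_swap_castSucc_succ, Submonoid.closure_le]
  rintro _ ⟨k, rfl⟩
  exact h k

end Generators

section Values

theorem val_swap_apply {n : ℕ} (i j k : Fin n) : (Equiv.swap i j k : ℕ) =
    if (k : ℕ) = i then (j : ℕ) else if (k : ℕ) = j then (i : ℕ) else k := by
  simp only [Equiv.swap_apply_def, Fin.ext_iff]
  split_ifs <;> rfl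

variable {m : ℕ} (i : Fin (m + 2))

theorem val_finRotate :
    (finRotate (m + 2) i : ℕ) = if (i : ℕ) = m + 1 then 0 else (i : ℕ) + 1 := by
  simp only [coe_finRotate, Fin.ext_iff, Fin.val_last]

theorem val_swap_mul_finRotate :
    ((Equiv.swap 0 1 * finRotate (m + 2) : Equiv.Perm (Fin (m + 2))) i : ℕ) =
      if (i : ℕ) = m + 1 then 1 else if (i : ℕ) = 0 then 0 else (i : ℕ) + 1 := by
  simp only [Equiv.Perm.mul_apply, val_swap_apply, val_finRotate, Fin.val_zero, Fin.val_one]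
  grind

theorem val_swap_mul_finRotate_sq :
    ((Equiv.swap 0 1 * finRotate (m + 2) ^ 2 : Equiv.Perm (Fin (m + 2))) i : ℕ) =
      if (i : ℕ) = m + 1 then 0 else if (i : ℕ) = m then 1 else (i : ℕ) + 2 := by
  simp only [sq, Equiv.Perm.mul_apply, val_swap_apply, val_finRotate, Fin.val_zero, Fin.val_one]
  grind

end Values

theorem mem_avoidSet_insert {n : ℕ} {x : Pattern} {T : Set Pattern} {π : Equiv.Perm (Fin n)} :
    π ∈ avoidSet n (insert x T) ↔ ¬ PermContains x.2 π ∧ π ∈ avoidSet n T :=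
  Set.forall_mem_insert ..

theorem mem_avoidSet_singleton {n : ℕ} {x : Pattern} {π : Equiv.Perm (Fin n)} :
    π ∈ avoidSet n {x} ↔ ¬ PermContains x.2 π :=
  forall_eq

namespace AvoidersGenerate

theorem of_two_le {T : Set Pattern}
    (h : ∀ m, Subgroup.closure (avoidSet (m + 2) T) = ⊤) : AvoidersGenerate T := by
  rintro (_ | _ | m)
  · exact Subsingleton.elim _ _
  · exact Subsingleton.elim (α := Subgroup (Equiv.Perm (Fin 1))) _ _
  · exact h m

theorem of_finRotate_mem {T : Set Pattern} (k : ℕ)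
    (hrot : ∀ m, finRotate (m + 2) ∈ avoidSet (m + 2) T)
    (hmul : ∀ m, Equiv.swap 0 1 * finRotate (m + 2) ^ k ∈ avoidSet (m + 2) T) :
    AvoidersGenerate T :=
  .of_two_le fun m =>
    have hrot' := Subgroup.subset_closure (hrot m)
    eq_top_of_finRotate_mem_of_swap_mem hrot'
      ((Subgroup.mul_mem_cancel_right _ (pow_mem hrot' k)).1 (Subgroup.subset_closure (hmul m)))

end AvoidersGenerate

theorem avoidersGenerate_132_213_312_4321 :
    AvoidersGenerate {⟨3, p132⟩, ⟨3, p213⟩, ⟨3, p312⟩, ⟨4, p4321⟩} := by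
  refine .of_finRotate_mem 2 (fun m => ?_) (fun m => ?_) <;>
    simp only [mem_avoidSet_insert, mem_avoidSet_singleton, permContains_p132, permContains_p213,
      permContains_p312, permContains_p4321, Fin.lt_def, val_finRotate, val_swap_mul_finRotate_sq]
  all_goals grind

theorem avoidersGenerate_213_312_321_1243 :
    AvoidersGenerate {⟨3, p213⟩, ⟨3, p312⟩, ⟨3, p321⟩, ⟨4, p1243⟩} := by
  refine .of_finRotate_mem 1 (fun m => ?_) (fun m => ?_) <;>
    simp only [mem_avoidSet_insert, mem_avoidSet_singleton, permContains_p213, permContains_p312,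
      permContains_p321, permContains_p1243, Fin.lt_def, pow_one, val_finRotate,
      val_swap_mul_finRotate]
  all_goals grind

theorem avoidersGenerate_132_231_312 :
    AvoidersGenerate {⟨3, p132⟩, ⟨3, p231⟩, ⟨3, p312⟩} := by
  refine .of_two_le fun m => ?_
  set A := avoidSet (m + 2) {⟨3, p132⟩, ⟨3, p231⟩, ⟨3, p312⟩} with hA
  have hswap : Equiv.swap 0 1 ∈ A := by
    simp only [hA, mem_avoidSet_insert, mem_avoidSet_singleton, permContains_p132,
      permContains_p231, permContains_p312, Fin.lt_def, val_swap_apply, Fin.val_zero, Fin.val_one]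
    grind
  have hrev : Fin.revPerm ∈ A := by
    simp only [hA, mem_avoidSet_insert, mem_avoidSet_singleton, permContains_p132,
      permContains_p231, permContains_p312, Fin.lt_def, Fin.revPerm_apply, Fin.val_rev]
    grind
  have hmul : Fin.revPerm * finRotate (m + 2) ∈ A := by
    simp only [hA, mem_avoidSet_insert, mem_avoidSet_singleton, permContains_p132,
      permContains_p231, permContains_p312, Fin.lt_def, Equiv.Perm.mul_apply, val_finRotate,
      Fin.revPerm_apply, Fin.val_rev]
    grind
  exact eq_top_of_finRotate_mem_of_swap_mem ((Subgroup.mul_mem_cancel_left _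
    (Subgroup.subset_closure hrev)).1 (Subgroup.subset_closure hmul))
    (Subgroup.subset_closure hswap)

theorem avoidersGenerate_231_312_321 :
    AvoidersGenerate {⟨3, p231⟩, ⟨3, p312⟩, ⟨3, p321⟩} := by
  refine .of_two_le fun m => eq_top_of_forall_swap_castSucc_succ_mem fun k =>
    Subgroup.subset_closure ?_
  simp only [mem_avoidSet_insert, mem_avoidSet_singleton, permContains_p231, permContains_p312,
    permContains_p321, Fin.lt_def, val_swap_apply, Fin.val_castSucc, Fin.val_succ]
  grind

theorem avoidersGenerate_132_213_231 :
    AvoidersGenerate {⟨3, p132⟩, ⟨3, p213⟩, ⟨3, p231⟩} :=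
  avoidersGenerate_132_213_312_4321.of_inv <| by
    simp only [Set.mem_insert_iff, Set.mem_singleton_iff, forall_eq_or_imp, forall_eq,
      Sigma.mk.injEq, heq_eq_eq, Nat.reduceEqDiff, false_and, true_and, or_false]
    decide

theorem avoidersGenerate_213_231_321 :
    AvoidersGenerate {⟨3, p213⟩, ⟨3, p231⟩, ⟨3, p321⟩} :=
  avoidersGenerate_213_312_321_1243.of_inv <| by
    simp only [Set.mem_insert_iff, Set.mem_singleton_iff, forall_eq_or_imp, forall_eq,
      Sigma.mk.injEq, heq_eq_eq, Nat.reduceEqDiff, false_and, true_and, or_false]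
    decide

theorem avoidersGenerate_132_231_321_2134 :
    AvoidersGenerate {⟨3, p132⟩, ⟨3, p231⟩, ⟨3, p321⟩, ⟨4, p2134⟩} :=
  avoidersGenerate_213_312_321_1243.of_revPerm_conj <| by
    simp only [Set.mem_insert_iff, Set.mem_singleton_iff, forall_eq_or_imp, forall_eq,
      Sigma.mk.injEq, heq_eq_eq, Nat.reduceEqDiff, false_and, true_and, or_false]
    decide

theorem avoidersGenerate_132_312_321 :
    AvoidersGenerate {⟨3, p132⟩, ⟨3, p312⟩, ⟨3, p321⟩} :=
  avoidersGenerate_132_231_321_2134.of_inv <| by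
    simp only [Set.mem_insert_iff, Set.mem_singleton_iff, forall_eq_or_imp, forall_eq,
      Sigma.mk.injEq, heq_eq_eq, Nat.reduceEqDiff, false_and, true_and, or_false]
    decide

theorem avoidersGenerate_213_231_312 :
    AvoidersGenerate {⟨3, p213⟩, ⟨3, p231⟩, ⟨3, p312⟩} :=
  avoidersGenerate_132_231_312.of_revPerm_conj <| by
    simp only [Set.mem_insert_iff, Set.mem_singleton_iff, forall_eq_or_imp, forall_eq,
      Sigma.mk.injEq, heq_eq_eq, true_and]
    decide

/-- `{132, 213, 321}`: among the sets of at most three nonidentity patterns of length three, the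
only one whose avoiders fail to generate. -/
def exceptionalTriple : Finset (Equiv.Perm (Fin 3)) := {p132, p213, p321}

theorem subset_triple_of_card_le_three : ∀ S : Finset (Equiv.Perm (Fin 3)), 1 ∉ S → S.card ≤ 3 →
    S ≠ exceptionalTriple → S ⊆ {p132, p213, p231} ∨ S ⊆ {p132, p213, p312} ∨
      S ⊆ {p132, p231, p312} ∨ S ⊆ {p132, p231, p321} ∨ S ⊆ {p132, p312, p321} ∨
      S ⊆ {p213, p231, p312} ∨ S ⊆ {p213, p231, p321} ∨ S ⊆ {p213, p312, p321} ∨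
      S ⊆ {p231, p312, p321} := by
  decide +kernel

theorem avoidersGenerate_image_sigmaMk_three {S : Finset (Equiv.Perm (Fin 3))} (h1 : 1 ∉ S)
    (hcard : S.card ≤ 3) (hS : S ≠ exceptionalTriple) :
    AvoidersGenerate (Sigma.mk 3 '' (S : Set (Equiv.Perm (Fin 3)))) := by
  have hmono {U : Finset (Equiv.Perm (Fin 3))} {V : Set Pattern} (hSU : S ⊆ U)
      (hV : AvoidersGenerate V) (hUV : ∀ p ∈ U, ⟨3, p⟩ ∈ V) :
      AvoidersGenerate (Sigma.mk 3 '' (S : Set (Equiv.Perm (Fin 3)))) :=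
    hV.mono_subset (Set.image_subset_iff.2 fun p hp => hUV p (hSU hp))
  obtain h | h | h | h | h | h | h | h | h := subset_triple_of_card_le_three S h1 hcard hS
  · exact hmono h avoidersGenerate_132_213_231 (by simp)
  · exact hmono h avoidersGenerate_132_213_312_4321 (by simp)
  · exact hmono h avoidersGenerate_132_231_312 (by simp)
  · exact hmono h avoidersGenerate_132_231_321_2134 (by simp)
  · exact hmono h avoidersGenerate_132_312_321 (by simp)
  · exact hmono h avoidersGenerate_213_231_312 (by simp)
  · exact hmono h avoidersGenerate_213_231_321 (by simp)
  · exact hmono h avoidersGenerate_213_312_321_1243 (by simp)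
  · exact hmono h avoidersGenerate_231_312_321 (by simp)

theorem exists_ne_permContains_or_eq_of_length_four :
    ∀ p ∈ exceptionalTriple, ∀ σ : Equiv.Perm (Fin 4), PermContains p σ →
      (∃ q, q ≠ 1 ∧ q ≠ p ∧ PermContains q σ) ∨
      (p = p132 ∧ σ = p1243 ∨ p = p213 ∧ σ = p2134 ∨ p = p321 ∧ σ = p4321) := by
  decide +kernel

theorem exists_avoidersGenerate_insert_exceptionalTriple_erase {x : Pattern}
    {p : Equiv.Perm (Fin 3)} (hx : 4 ≤ x.1) (hp : p ∈ exceptionalTriple)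
    (hpx : PermContains p x.2) : ∃ y : Pattern, PermContains y.2 x.2 ∧
      AvoidersGenerate (insert y (Sigma.mk 3 '' (exceptionalTriple.erase p : Set _))) := by
  obtain ⟨σ, hpσ, hσx⟩ := hpx.exists_between (l := 4) (by decide) hx
  obtain ⟨q, hq1, hqp, hqσ⟩ | ⟨rfl, rfl⟩ | ⟨rfl, rfl⟩ | ⟨rfl, rfl⟩ :=
    exists_ne_permContains_or_eq_of_length_four p hp σ hpσ
  · refine ⟨⟨3, q⟩, hqσ.trans hσx, ?_⟩
    have herase : ∀ p ∈ exceptionalTriple, ∀ q, q ≠ 1 → q ≠ p →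
        1 ∉ insert q (exceptionalTriple.erase p) ∧
        (insert q (exceptionalTriple.erase p)).card ≤ 3 ∧
        insert q (exceptionalTriple.erase p) ≠ exceptionalTriple := by
      decide +kernel
    obtain ⟨h1, hcard, hne⟩ := herase p hp q hq1 hqp
    simpa [Set.image_insert_eq] using avoidersGenerate_image_sigmaMk_three h1 hcard hne
  · have herase : exceptionalTriple.erase p132 = {p213, p321} := by decide
    refine ⟨⟨4, p1243⟩, hσx, avoidersGenerate_213_312_321_1243.mono_subset ?_⟩
    simp [herase, Set.insert_subset_iff]
  · have herase : exceptionalTriple.erase p213 = {p132, p321} := by decide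
    refine ⟨⟨4, p2134⟩, hσx, avoidersGenerate_132_231_321_2134.mono_subset ?_⟩
    simp [herase, Set.insert_subset_iff]
  · have herase : exceptionalTriple.erase p321 = {p132, p213} := by decide
    refine ⟨⟨4, p4321⟩, hσx, avoidersGenerate_132_213_312_4321.mono_subset ?_⟩
    simp [herase, Set.insert_subset_iff]

theorem eq_sigmaMk_of_permContains {k : ℕ} {τ : Equiv.Perm (Fin k)} {x : Pattern} (hx : x.1 = k)
    (h : PermContains τ x.2) : x = ⟨k, τ⟩ := by
  obtain ⟨_, π⟩ := x
  subst hx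
  rw [h.eq]

theorem exists_four_le_of_image_eq_exceptionalTriple {T : Finset Pattern}
    {f : Pattern → Equiv.Perm (Fin 3)} (hf : ∀ x ∈ T, PermContains (f x) x.2)
    (hlen : ∀ x ∈ T, 3 ≤ x.1) (himage : T.image f = exceptionalTriple)
    (hT : (T : Set Pattern) ≠ {⟨3, p132⟩, ⟨3, p213⟩, ⟨3, p321⟩}) : ∃ x ∈ T, 4 ≤ x.1 := by
  by_contra! hshort
  have heq : ∀ x ∈ T, x = ⟨3, f x⟩ := fun x hx =>
    eq_sigmaMk_of_permContains (by have := hlen x hx; have := hshort x hx; omega) (hf x hx)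
  refine hT ?_
  calc (T : Set Pattern) = (fun x => ⟨3, f x⟩) '' (T : Set Pattern) := by
        exact (Set.image_id _).symm.trans (Set.image_congr heq)
    _ = Sigma.mk 3 '' (T.image f : Set (Equiv.Perm (Fin 3))) := by
        rw [Finset.coe_image, Set.image_image]
    _ = _ := by simp [himage, exceptionalTriple, Set.image_insert_eq]

theorem avoidersGenerate_of_forall_ne_one {T : Set Pattern} (hfin : T.Finite)
    (hcard : T.ncard ≤ 3) (hlen : ∀ x ∈ T, 3 ≤ x.1) (h1 : ∀ x ∈ T, x.2 ≠ 1)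
    (hT : T ≠ {⟨3, p132⟩, ⟨3, p213⟩, ⟨3, p321⟩}) : AvoidersGenerate T := by
  lift T to Finset Pattern using hfin
  rw [Set.ncard_coe_finset] at hcard
  have hsub : ∀ x ∈ T, ∃ τ : Equiv.Perm (Fin 3), τ ≠ 1 ∧ PermContains τ x.2 := fun x hx =>
    exists_permContains_ne_one (h1 x hx) (by decide) (hlen x hx)
  choose! f hf1 hf using hsub
  by_cases himage : T.image f = exceptionalTriple
  · obtain ⟨x, hx, hx4⟩ := exists_four_le_of_image_eq_exceptionalTriple hf hlen himage hT
    have hinj : Set.InjOn f T := Finset.card_image_iff.1 <|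
      Finset.card_image_le.antisymm (hcard.trans (himage ▸ by decide))
    obtain ⟨y, hyx, hy⟩ := exists_avoidersGenerate_insert_exceptionalTriple_erase hx4
      (himage ▸ Finset.mem_image_of_mem f hx) (hf x hx)
    refine hy.mono fun z hz => ?_
    obtain rfl | hzx := eq_or_ne z x
    · exact ⟨y, Set.mem_insert .., hyx⟩
    · refine ⟨⟨3, f z⟩, Set.mem_insert_of_mem _ (Set.mem_image_of_mem _ ?_), hf z hz⟩
      exact Finset.mem_erase.2 ⟨hinj.ne hz hx hzx, himage ▸ Finset.mem_image_of_mem f hz⟩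
  · have h1S : 1 ∉ T.image f := fun h =>
      let ⟨x, hx, hfx⟩ := Finset.mem_image.1 h
      hf1 x hx hfx
    exact (avoidersGenerate_image_sigmaMk_three h1S (Finset.card_image_le.trans hcard) himage).mono
      fun x hx => ⟨⟨3, f x⟩, Set.mem_image_of_mem _ (Finset.mem_image_of_mem f hx), hf x hx⟩

theorem image_complement_exceptional :
    Pattern.complement '' {⟨3, p132⟩, ⟨3, p213⟩, ⟨3, p321⟩} =
      {⟨3, p123⟩, ⟨3, p231⟩, ⟨3, p312⟩} := by
  have h132 : Pattern.complement ⟨3, p132⟩ = ⟨3, p312⟩ :=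
    congrArg (Sigma.mk 3) (by decide : Fin.revPerm * p132 = p312)
  have h213 : Pattern.complement ⟨3, p213⟩ = ⟨3, p231⟩ :=
    congrArg (Sigma.mk 3) (by decide : Fin.revPerm * p213 = p231)
  have h321 : Pattern.complement ⟨3, p321⟩ = ⟨3, p123⟩ :=
    congrArg (Sigma.mk 3) (by decide : Fin.revPerm * p321 = p123)
  rw [Set.image_insert_eq, Set.image_pair, h132, h213, h321, Set.insert_comm, Set.pair_comm,
    Set.insert_comm]

theorem avoidersGenerate_of_forall_ne_revPerm {T : Set Pattern} (hfin : T.Finite)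
    (hcard : T.ncard ≤ 3) (hlen : ∀ x ∈ T, 3 ≤ x.1) (hrev : ∀ x ∈ T, x.2 ≠ Fin.revPerm)
    (hT : T ≠ {⟨3, p123⟩, ⟨3, p231⟩, ⟨3, p312⟩}) : AvoidersGenerate T := by
  have hne : Pattern.complement '' T ≠ {⟨3, p132⟩, ⟨3, p213⟩, ⟨3, p321⟩} := fun h => hT <| by
    rw [← image_complement_exceptional, ← h,
      Function.LeftInverse.image_image Pattern.complement_involutive]
  have hgen : AvoidersGenerate (Pattern.complement '' T) :=
    avoidersGenerate_of_forall_ne_one (hfin.image _) ((Set.ncard_image_le hfin).trans hcard)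
      (Set.forall_mem_image.2 hlen)
      (Set.forall_mem_image.2 fun x hx => Pattern.complement_snd_ne_one (hrev x hx)) hne
  exact hgen.of_image_complement hrev

theorem closure_avoid_at_most_three_patterns (T : Set (Σ k : ℕ, Equiv.Perm (Fin k)))
    (hfin : T.Finite) (hcard : T.ncard ≤ 3)
    (hlen : ∀ x ∈ T, 3 ≤ x.1)
    (hpair : ∀ r s : ℕ, 1 ≤ r → 1 ≤ s →
      ¬ ((⟨r, (1 : Equiv.Perm (Fin r))⟩ : Σ k : ℕ, Equiv.Perm (Fin k)) ∈ T ∧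
         (⟨s, (Fin.revPerm : Equiv.Perm (Fin s))⟩ : Σ k : ℕ, Equiv.Perm (Fin k)) ∈ T))
    (h2 : T ≠ ({⟨3, p132⟩, ⟨3, p213⟩, ⟨3, p321⟩} : Set (Σ k : ℕ, Equiv.Perm (Fin k))))
    (h3 : T ≠ ({⟨3, p123⟩, ⟨3, p231⟩, ⟨3, p312⟩} : Set (Σ k : ℕ, Equiv.Perm (Fin k))))
    (n : ℕ) :
    Subgroup.closure (avoidSet n T) = ⊤ := by
  by_cases hid : ∀ x ∈ T, x.2 ≠ 1
  · exact avoidersGenerate_of_forall_ne_one hfin hcard hlen hid h2 n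
  · push Not at hid
    obtain ⟨⟨r, ρ⟩, hr, hρ⟩ := hid
    have hrev : ∀ x ∈ T, x.2 ≠ Fin.revPerm := fun ⟨s, σ⟩ hs hσ =>
      hpair r s (le_trans (by decide) (hlen _ hr)) (le_trans (by decide) (hlen _ hs))
        ⟨hρ ▸ hr, hσ ▸ hs⟩
    exact avoidersGenerate_of_forall_ne_revPerm hfin hcard hlen hrev h3 n
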